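/- Let s ∈ (1,3). For every x > 0, the function g(x) = x^{1−s/2} K_{(s−2)/4}(2πx²) satisfies −g′(x) = [4π x^{1−s}] · [x^{(s+2)/2} K_{(s+2)/4}(2πx²)]. Moreover, −g′ is a product of positive decreasing functions on (0,∞), hence −g′ is positive and decreasing on (0,∞); in particular g is positive, decreasing, and convex on (0,∞). -/

import Mathlib

/-!
Everything rests on Macdonald's integral `H(ν, w) = ∫₀^∞ t^(ν-1) exp(-t - w/t) dt` (`w > 0`), which
is entire in `ν`. Differentiation under the integral sign gives `∂H(ν, w)/∂w = -H(ν - 1, w)`, and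
the substitution `t ↦ w/t` gives `H(ν, w) = w^ν H(-ν, w)`. With the Bessel–Clifford function
`C_ν(w) = Σ wⁿ / (n! Γ(n + ν + 1))`, it follows that `H(ν, ·)`, `C_{-ν}` and `w^ν C_ν` are first
components of solutions of the linear system `y' = w^(ν-1) p`, `p' = w^(-ν) y`, whose Wronskians
are constant. For `0 < Re ν < 1` these constants are read off as `w → 0⁺`, and Euler's reflection
formula turns the resulting linear relation into `sin(πν) H(ν, w) = π (C_{-ν}(w) - w^ν C_ν(w))`,
which extends to all `ν` by analytic continuation. Hence `K_ν(x) = (x/2)^(-ν) H(ν, x²/4) / 2`,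
at integer orders by continuity in `ν`.

This makes `K_ν` positive for real `ν` and even in `ν`, and gives
`d/dx [x^ν K_ν(x)] = -x^ν K_{ν-1}(x)`, so `x^ν K_ν(x)` decreases. With `ν = (s - 2)/4` these facts
give the formula for `-g'`, which is then a product of positive decreasing functions.
-/

open Filter Set MeasureTheory
open scoped Real Classical

/-- The modified Bessel function of the first kind
`I_ν(z) = Σ_{n=0}^∞ (z/2)^{ν+2n} / (n! Γ(n+ν+1))`, with the principal branch of powers.
(When `ν` is a negative integer the terms with `n + ν + 1 ≤ 0` vanish, since Mathlib's
`Complex.Gamma` vanishes at nonpositive integers, implementing the convention that the sum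
starts at `n = -ν`.) -/
noncomputable def besselI (ν z : ℂ) : ℂ :=
  ∑' n : ℕ, (z / 2) ^ (ν + 2 * (n : ℂ)) / ((n.factorial : ℂ) * Complex.Gamma ((n : ℂ) + ν + 1))

/-- The modified Bessel function of the second kind:
`K_ν = (π / (2 sin (νπ))) (I_{-ν} - I_ν)` for non-integer `ν`, and for integer `ν` the limit
of this expression as the order tends to `ν`. -/

noncomputable def besselK (ν z : ℂ) : ℂ :=
  if ∃ n : ℤ, ν = (n : ℂ) then
    limUnder (nhdsWithin ν {ν}ᶜ)
      (fun μ => ((Real.pi : ℂ) / (2 * Complex.sin (μ * (Real.pi : ℂ)))) *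
        (besselI (-μ) z - besselI μ z))
  else ((Real.pi : ℂ) / (2 * Complex.sin (ν * (Real.pi : ℂ)))) * (besselI (-ν) z - besselI ν z)

section

open scoped Topology

/-! ### The Bessel–Clifford function -/

/-- The Bessel–Clifford function `C_ν(w) = Σ wⁿ / (n! Γ(ν + 1 + n))`, the regularized
hypergeometric function `₀F₁`. It is entire in both variables and `I_ν(z) = (z/2)^ν C_ν(z²/4)`. -/
noncomputable def besselClifford (ν w : ℂ) : ℂ := Complex.regularizedHGFun 0 {ν + 1} w

lemma regularizedHGFunCoeff_zero_singleton (c : ℂ) (n : ℕ) :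
    Complex.regularizedHGFunCoeff 0 {c} n = (n.factorial : ℂ)⁻¹ * (Complex.Gamma (c + n))⁻¹ := by
  simp [Complex.regularizedHGFunCoeff, mul_comm]

lemma succ_mul_regularizedHGFunCoeff_succ (c : ℂ) (n : ℕ) :
    (n + 1) * Complex.regularizedHGFunCoeff 0 {c} (n + 1) =
      Complex.regularizedHGFunCoeff 0 {c + 1} n := by
  have hn : (n + 1 : ℂ) ≠ 0 := n.cast_add_one_ne_zero
  rw [regularizedHGFunCoeff_zero_singleton, regularizedHGFunCoeff_zero_singleton,
    Nat.factorial_succ]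
  push_cast
  rw [mul_inv, ← mul_assoc, ← mul_assoc, mul_inv_cancel₀ hn, one_mul,
    show c + (n + 1) = c + 1 + n by ring]

lemma add_mul_regularizedHGFunCoeff_add_one (c : ℂ) (n : ℕ) :
    (c + n) * Complex.regularizedHGFunCoeff 0 {c + 1} n =
      Complex.regularizedHGFunCoeff 0 {c} n := by
  rw [regularizedHGFunCoeff_zero_singleton, regularizedHGFunCoeff_zero_singleton,
    Complex.one_div_Gamma_eq_self_mul_one_div_Gamma_add_one (c + n), add_right_comm]
  ring

lemma hasFPowerSeriesOnBall_besselClifford (ν : ℂ) :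
    HasFPowerSeriesOnBall (besselClifford ν) (Complex.regularizedHGFunSeries 0 {ν + 1}) 0 ⊤ := by
  have hr : (Complex.regularizedHGFunSeries 0 {ν + 1}).radius = ⊤ :=
    Complex.radius_regularizedHGFunSeries_eq_top (by simp)
  exact hr ▸ FormalMultilinearSeries.hasFPowerSeriesOnBall _ (by simp [hr])

lemma hasSum_besselClifford (ν w : ℂ) :
    HasSum (fun n : ℕ => w ^ n * Complex.regularizedHGFunCoeff 0 {ν + 1} n)
      (besselClifford ν w) := by
  simpa [FormalMultilinearSeries.apply_eq_pow_smul_coeff] using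
    (hasFPowerSeriesOnBall_besselClifford ν).hasSum (y := w) (by simp)

lemma besselClifford_zero_right (ν : ℂ) : besselClifford ν 0 = (Complex.Gamma (ν + 1))⁻¹ := by
  refine (hasSum_besselClifford ν 0).unique ?_
  simpa [regularizedHGFunCoeff_zero_singleton] using
    hasSum_single (f := fun n : ℕ => 0 ^ n * Complex.regularizedHGFunCoeff 0 {ν + 1} n) 0
      (by simp +contextual)

lemma hasDerivAt_besselClifford (ν w : ℂ) :
    HasDerivAt (besselClifford ν) (besselClifford (ν + 1) w) w := by
  have hp := hasFPowerSeriesOnBall_besselClifford ν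
  have hdiff : DifferentiableAt ℂ (besselClifford ν) w :=
    (hp.analyticAt_of_mem (by simp)).differentiableAt
  have hsum := (hp.fderiv.hasSum (y := w) (by simp)).mapL
    (ContinuousLinearMap.apply ℂ ℂ (1 : ℂ))
  have hderiv : deriv (besselClifford ν) w = besselClifford (ν + 1) w := by
    refine HasSum.unique ?_ (hasSum_besselClifford (ν + 1) w)
    convert! hsum using 2 with n
    · simp [FormalMultilinearSeries.derivSeries_coeff_one, ← succ_mul_regularizedHGFunCoeff_succ]
    · simp
  exact hderiv ▸ hdiff.hasDerivAt

lemma besselClifford_recurrence (ν w : ℂ) :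
    ν * besselClifford ν w + w * besselClifford (ν + 1) w = besselClifford (ν - 1) w := by
  have hshift : HasSum (fun n : ℕ => n * (w ^ n * Complex.regularizedHGFunCoeff 0 {ν + 1} n))
      (w * besselClifford (ν + 1) w) := by
    rw [← hasSum_nat_add_iff' 1, Finset.sum_range_one, Nat.cast_zero, zero_mul, sub_zero]
    refine ((hasSum_besselClifford (ν + 1) w).mul_left w).congr_fun fun n => ?_
    rw [← succ_mul_regularizedHGFunCoeff_succ (ν + 1)]
    push_cast
    ring
  refine (((hasSum_besselClifford ν w).mul_left ν).add hshift).unique ?_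
  refine (hasSum_besselClifford (ν - 1) w).congr_fun fun n => ?_
  rw [sub_add_cancel, ← add_mul_regularizedHGFunCoeff_add_one ν]
  ring

lemma norm_inv_Gamma_add_one_le {s : ℂ} (hs : 1 ≤ ‖s‖) :
    ‖(Complex.Gamma (s + 1))⁻¹‖ ≤ ‖(Complex.Gamma s)⁻¹‖ := by
  rw [Complex.one_div_Gamma_eq_self_mul_one_div_Gamma_add_one s, norm_mul]
  exact le_mul_of_one_le_left (norm_nonneg _) hs

lemma exists_norm_inv_Gamma_add_natCast_le {K : Set ℂ} (hK : IsCompact K) :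
    ∃ C : ℝ, ∀ s ∈ K, ∀ n : ℕ, ‖(Complex.Gamma (s + n))⁻¹‖ ≤ C := by
  obtain ⟨R, hR⟩ := hK.isBounded.exists_norm_le
  set N := ⌈R + 1⌉₊
  have hcont : Continuous fun p : ℂ × ℕ => (Complex.Gamma (p.1 + p.2))⁻¹ :=
    Complex.differentiable_one_div_Gamma.continuous.comp
      (continuous_fst.add (continuous_of_discreteTopology.comp continuous_snd))
  obtain ⟨C, hC⟩ := (hK.prod (Set.finite_Iic N).isCompact).exists_bound_of_continuousOn
    hcont.continuousOn
  refine ⟨C, fun s hs n => ?_⟩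
  rcases le_total n N with hn | hn
  · exact hC (s, n) ⟨hs, hn⟩
  · induction n, hn using Nat.le_induction with
    | base => exact hC (s, N) ⟨hs, Set.self_mem_Iic⟩
    | succ n hn ih =>
      have hnR : R + 1 ≤ n := (Nat.le_ceil _).trans (mod_cast hn)
      have hle : 1 ≤ ‖s + n‖ := by
        have htri := norm_sub_le_norm_add (n : ℂ) s
        rw [Complex.norm_natCast, add_comm (n : ℂ) s] at htri
        linarith [hR s hs]
      rw [Nat.cast_succ, ← add_assoc]
      exact (norm_inv_Gamma_add_one_le hle).trans ih

lemma differentiable_besselClifford_order (w : ℂ) :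
    Differentiable ℂ fun ν => besselClifford ν w := by
  intro ν₀
  have hK : IsCompact ((· + 1) '' Metric.closedBall ν₀ 1) :=
    (isCompact_closedBall ν₀ 1).image (by fun_prop)
  obtain ⟨C, hC⟩ := exists_norm_inv_Gamma_add_natCast_le hK
  simp_rw [fun ν => (hasSum_besselClifford ν w).tsum_eq.symm, regularizedHGFunCoeff_zero_singleton]
  refine (Complex.differentiableOn_tsum_of_summable_norm
    ((Real.summable_pow_div_factorial ‖w‖).mul_right C) (fun n => ?_) Metric.isOpen_ball
    fun n ν hν => ?_).differentiableAt (Metric.ball_mem_nhds ν₀ one_pos)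
  · have hΓ := Complex.differentiable_one_div_Gamma.comp
      (by fun_prop : Differentiable ℂ fun ν : ℂ => ν + 1 + n)
    exact ((hΓ.const_mul _).const_mul _).differentiableOn
  · rw [← mul_assoc, ← div_eq_mul_inv (w ^ n), norm_mul, norm_div, norm_pow, Complex.norm_natCast]
    gcongr
    exact hC _ ⟨ν, Metric.ball_subset_closedBall hν, rfl⟩ n

lemma besselI_eq_cpow_mul_besselClifford (ν : ℂ) {z : ℂ} (hz : z ≠ 0) :
    besselI ν z = (z / 2) ^ ν * besselClifford ν ((z / 2) ^ 2) := by
  rw [← ((hasSum_besselClifford ν _).mul_left _).tsum_eq, besselI]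
  refine tsum_congr fun n => ?_
  have hz2 : z / 2 ≠ 0 := div_ne_zero hz two_ne_zero
  have hpow : (z / 2) ^ (ν + 2 * (n : ℂ)) = (z / 2) ^ ν * ((z / 2) ^ 2) ^ n := by
    rw [Complex.cpow_add _ _ hz2, ← pow_mul, ← Complex.cpow_natCast]
    push_cast
    rfl
  rw [hpow, regularizedHGFunCoeff_zero_singleton, ← mul_inv, ← mul_assoc,
    show (n : ℂ) + ν + 1 = ν + 1 + n by ring, div_eq_mul_inv]

/-! ### The Macdonald integral -/

/-- The kernel `exp(-t - w/t)`, valued in `ℂ` so that its Mellin transform can be taken. -/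
noncomputable def macdonaldKernel (w t : ℝ) : ℂ := (Real.exp (-t - w / t) : ℂ)

/-- Macdonald's integral `H(ν, w) = ∫₀^∞ t^(ν-1) exp(-t - w/t) dt`, which represents `K_ν`
through `K_ν(x) = (x/2)^(-ν) H(ν, x²/4) / 2`. -/
noncomputable def macdonaldIntegral (ν : ℂ) (w : ℝ) : ℂ := mellin (macdonaldKernel w) ν

lemma norm_macdonaldKernel (w t : ℝ) : ‖macdonaldKernel w t‖ = Real.exp (-t - w / t) :=
  Complex.norm_of_nonneg (Real.exp_pos _).le

lemma norm_macdonaldKernel_anti {t : ℝ} (ht : 0 ≤ t) : Antitone fun w => ‖macdonaldKernel w t‖ := by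
  intro v w hvw
  simp only [norm_macdonaldKernel]
  gcongr

lemma macdonaldKernel_zero_left (t : ℝ) : macdonaldKernel 0 t = Real.exp (-t) := by
  simp [macdonaldKernel]

lemma macdonaldKernel_mul_inv {w : ℝ} (hw : w ≠ 0) (t : ℝ) :
    macdonaldKernel w (w * t⁻¹) = macdonaldKernel w t := by
  rw [macdonaldKernel, macdonaldKernel, ← div_eq_mul_inv, div_div_cancel₀ hw, sub_eq_add_neg,
    add_comm, ← sub_eq_add_neg]

lemma hasDerivAt_macdonaldKernel_left (w t : ℝ) :
    HasDerivAt (fun w => macdonaldKernel w t) (-(macdonaldKernel w t / t)) w := by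
  have hexp : HasDerivAt (fun w => Real.exp (-t - w / t)) (Real.exp (-t - w / t) * -(1 / t)) w :=
    (((hasDerivAt_id w).div_const t).const_sub (-t)).exp
  refine hexp.ofReal_comp.congr_deriv ?_
  rw [macdonaldKernel]
  push_cast
  ring

lemma locallyIntegrableOn_macdonaldKernel (w : ℝ) :
    LocallyIntegrableOn (macdonaldKernel w) (Ioi 0) := by
  refine ContinuousOn.locallyIntegrableOn (fun t (ht : 0 < t) => ?_) measurableSet_Ioi
  have ht' : t ≠ 0 := ht.ne'
  unfold macdonaldKernel
  exact ContinuousAt.continuousWithinAt (by fun_prop (disch := assumption))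

lemma macdonaldKernel_isBigO_atTop {w : ℝ} (hw : 0 ≤ w) :
    macdonaldKernel w =O[atTop] fun t => Real.exp (-1 * t) := by
  refine .of_bound' ((eventually_ge_atTop 0).mono fun t ht => ?_)
  rw [← Complex.norm_of_nonneg (Real.exp_pos _).le, neg_one_mul, ← macdonaldKernel_zero_left]
  simpa using norm_macdonaldKernel_anti ht hw

lemma macdonaldKernel_isBigO_nhdsGT_zero {w : ℝ} (hw : 0 < w) (b : ℝ) :
    macdonaldKernel w =O[𝓝[>] 0] (· ^ (-b)) := by
  have hdecay : (fun t : ℝ => Real.exp (-w * t⁻¹)) =O[𝓝[>] 0] fun t => t⁻¹ ^ b :=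
    (isLittleO_exp_neg_mul_rpow_atTop hw b).isBigO.comp_tendsto tendsto_inv_nhdsGT_zero
  refine (Asymptotics.IsBigO.of_bound' ?_).trans (hdecay.congr' .rfl ?_)
  · filter_upwards [self_mem_nhdsWithin] with t (ht : 0 < t)
    rw [norm_macdonaldKernel, Real.norm_of_nonneg (Real.exp_pos _).le, neg_mul, ← div_eq_mul_inv]
    gcongr
    linarith
  · filter_upwards [self_mem_nhdsWithin] with t (ht : 0 < t)
    rw [Real.rpow_neg ht.le, Real.inv_rpow ht.le]

lemma mellinConvergent_macdonaldKernel {w : ℝ} (hw : 0 < w) (ν : ℂ) :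
    MellinConvergent (macdonaldKernel w) ν :=
  mellinConvergent_of_isBigO_rpow_exp one_pos (locallyIntegrableOn_macdonaldKernel w)
    (macdonaldKernel_isBigO_atTop hw.le) (macdonaldKernel_isBigO_nhdsGT_zero hw _)
    (sub_one_lt ν.re)

lemma differentiable_macdonaldIntegral_order {w : ℝ} (hw : 0 < w) :
    Differentiable ℂ fun ν => macdonaldIntegral ν w := fun ν =>
  mellin_differentiableAt_of_isBigO_rpow_exp one_pos (locallyIntegrableOn_macdonaldKernel w)
    (macdonaldKernel_isBigO_atTop hw.le) (macdonaldKernel_isBigO_nhdsGT_zero hw _)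
    (sub_one_lt ν.re)

lemma macdonaldIntegral_eq_cpow_mul_neg {w : ℝ} (hw : 0 < w) (ν : ℂ) :
    macdonaldIntegral ν w = w ^ ν * macdonaldIntegral (-ν) w := by
  have hmellin := mellin_comp_inv (fun t => macdonaldKernel w (w * t)) ν
  simp only [macdonaldKernel_mul_inv hw.ne'] at hmellin
  rwa [mellin_comp_mul_left _ _ hw, neg_neg] at hmellin

lemma hasDerivAt_macdonaldIntegral {w : ℝ} (hw : 0 < w) (ν : ℂ) :
    HasDerivAt (macdonaldIntegral ν) (-macdonaldIntegral (ν - 1) w) w := by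
  have hint (v : ℝ) (hv : 0 < v) := mellinConvergent_macdonaldKernel hv
  have hmain := (hasDerivAt_integral_of_dominated_loc_of_deriv_le
    (μ := volume.restrict (Ioi (0 : ℝ)))
    (F := fun w t => (t : ℂ) ^ (ν - 1) • macdonaldKernel w t)
    (F' := fun w t => -((t : ℂ) ^ (ν - 1 - 1) • macdonaldKernel w t))
    (bound := fun t => ‖(t : ℂ) ^ (ν - 1 - 1) • macdonaldKernel (w / 2) t‖)
    (Ioi_mem_nhds (half_lt_self hw)) ?_ (hint w hw ν) (hint w hw (ν - 1)).1.neg ?_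
    (hint (w / 2) (half_pos hw) (ν - 1)).norm ?_).2
  · exact hmain.congr_deriv (integral_neg _)
  · filter_upwards [Ioi_mem_nhds hw] with v hv using (hint v hv ν).1
  · filter_upwards [ae_restrict_mem measurableSet_Ioi] with t (ht : 0 < t) v (hv : w / 2 < v)
    rw [norm_neg, norm_smul, norm_smul]
    exact mul_le_mul_of_nonneg_left (norm_macdonaldKernel_anti ht.le hv.le) (norm_nonneg _)
  · filter_upwards [ae_restrict_mem measurableSet_Ioi] with t (ht : 0 < t) v _
    refine ((hasDerivAt_macdonaldKernel_left v t).const_smul ((t : ℂ) ^ (ν - 1))).congr_deriv ?_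
    rw [Complex.cpow_sub (ν - 1) _ (Complex.ofReal_ne_zero.mpr ht.ne'), Complex.cpow_one, smul_neg,
      smul_eq_mul, smul_eq_mul, mul_div_left_comm, mul_comm]

lemma tendsto_macdonaldIntegral_nhdsGT_zero {ν : ℂ} (hν : 0 < ν.re) :
    Tendsto (macdonaldIntegral ν) (𝓝[>] 0) (𝓝 (Complex.Gamma ν)) := by
  have hΓ : Complex.Gamma ν = mellin (macdonaldKernel 0) ν := by
    rw [Complex.Gamma_eq_integral hν, Complex.GammaIntegral_eq_mellin,
      funext macdonaldKernel_zero_left]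
  have hbound : MellinConvergent (macdonaldKernel 0) ν := by
    simpa [MellinConvergent, macdonaldKernel_zero_left, mul_comm] using
      Complex.GammaIntegral_convergent hν
  rw [hΓ]
  refine tendsto_integral_filter_of_dominated_convergence _ ?_ ?_ hbound.norm ?_
  · filter_upwards [self_mem_nhdsWithin] with w hw
    exact (mellinConvergent_macdonaldKernel hw ν).1
  · filter_upwards [self_mem_nhdsWithin] with w (hw : 0 < w)
    filter_upwards [ae_restrict_mem measurableSet_Ioi] with t (ht : 0 < t)
    rw [norm_smul, norm_smul]
    exact mul_le_mul_of_nonneg_left (norm_macdonaldKernel_anti ht.le hw.le) (norm_nonneg _)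
  · refine ae_of_all _ fun t => tendsto_nhdsWithin_of_tendsto_nhds ?_
    exact (hasDerivAt_macdonaldKernel_left 0 t).continuousAt.tendsto.const_smul _

lemma macdonaldIntegral_ofReal_re_pos (a : ℝ) {w : ℝ} (hw : 0 < w) :
    0 < (macdonaldIntegral a w).re := by
  have hint := mellinConvergent_macdonaldKernel hw a
  have hre {t : ℝ} (ht : 0 < t) : 0 < ((t : ℂ) ^ (a - 1 : ℂ) • macdonaldKernel w t).re := by
    rw [← Complex.ofReal_one, ← Complex.ofReal_sub, ← Complex.ofReal_cpow ht.le, macdonaldKernel,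
      smul_eq_mul, ← Complex.ofReal_mul, Complex.ofReal_re]
    positivity
  rw [macdonaldIntegral, mellin, ← RCLike.re_to_complex, ← integral_re hint]
  refine (setIntegral_pos_iff_support_of_nonneg_ae ?_ hint.re).mpr ?_
  · filter_upwards [ae_restrict_mem measurableSet_Ioi] with t ht using (hre ht).le
  · have hIoi : 0 < volume (Ioi (0 : ℝ)) := by simp
    exact hIoi.trans_le (measure_mono fun t ht => ⟨(hre ht).ne', ht⟩)

/-! ### The connection formula -/

/-- The pair `(y, p)` solves the linear system `y' = a p`, `p' = b y` on `s`; this is the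
first-order form of the self-adjoint equation `(y' / a)' = b y`. -/
structure IsLinearSystemSolution {𝕜 A : Type*} [RCLike 𝕜] [NormedCommRing A] [NormedAlgebra 𝕜 A]
    (a b : 𝕜 → A) (s : Set 𝕜) (y p : 𝕜 → A) : Prop where
  hasDerivAt_fst : ∀ x ∈ s, HasDerivAt y (a x * p x) x
  hasDerivAt_snd : ∀ x ∈ s, HasDerivAt p (b x * y x) x

namespace IsLinearSystemSolution

variable {𝕜 A : Type*} [RCLike 𝕜] [NormedCommRing A] [NormedAlgebra 𝕜 A] {a b : 𝕜 → A} {s : Set 𝕜}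
  {y₁ p₁ y₂ p₂ y₃ p₃ : 𝕜 → A} {l : Filter 𝕜} [l.NeBot] {Y₁ P₁ Y₂ P₂ Y₃ P₃ : A}

lemma wronskian_eq_of_tendsto (h₁ : IsLinearSystemSolution a b s y₁ p₁)
    (h₂ : IsLinearSystemSolution a b s y₂ p₂) (hs : IsOpen s) (hsc : IsPreconnected s) (hl : s ∈ l)
    (hY₁ : Tendsto y₁ l (𝓝 Y₁)) (hP₁ : Tendsto p₁ l (𝓝 P₁))
    (hY₂ : Tendsto y₂ l (𝓝 Y₂)) (hP₂ : Tendsto p₂ l (𝓝 P₂)) {x : 𝕜} (hx : x ∈ s) :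
    y₁ x * p₂ x - p₁ x * y₂ x = Y₁ * P₂ - P₁ * Y₂ := by
  have hderiv : ∀ t ∈ s, HasDerivAt (fun t => y₁ t * p₂ t - p₁ t * y₂ t) 0 t := fun t ht =>
    (((h₁.hasDerivAt_fst t ht).mul (h₂.hasDerivAt_snd t ht)).sub
      ((h₁.hasDerivAt_snd t ht).mul (h₂.hasDerivAt_fst t ht))).congr_deriv (by ring)
  have hconst : ∀ t ∈ s, y₁ x * p₂ x - p₁ x * y₂ x = y₁ t * p₂ t - p₁ t * y₂ t := fun t ht =>
    hs.is_const_of_deriv_eq_zero hsc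
      (fun t ht => (hderiv t ht).differentiableAt.differentiableWithinAt)
      (fun t ht => (hderiv t ht).deriv) hx ht
  exact tendsto_nhds_unique (tendsto_const_nhds.congr' (mem_of_superset hl hconst))
    ((hY₁.mul hP₂).sub (hP₁.mul hY₂))

lemma linear_relation_of_tendsto (h₁ : IsLinearSystemSolution a b s y₁ p₁)
    (h₂ : IsLinearSystemSolution a b s y₂ p₂) (h₃ : IsLinearSystemSolution a b s y₃ p₃)
    (hs : IsOpen s) (hsc : IsPreconnected s) (hl : s ∈ l)
    (hY₁ : Tendsto y₁ l (𝓝 Y₁)) (hP₁ : Tendsto p₁ l (𝓝 P₁))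
    (hY₂ : Tendsto y₂ l (𝓝 Y₂)) (hP₂ : Tendsto p₂ l (𝓝 P₂))
    (hY₃ : Tendsto y₃ l (𝓝 Y₃)) (hP₃ : Tendsto p₃ l (𝓝 P₃)) {x : 𝕜} (hx : x ∈ s) :
    (Y₂ * P₃ - P₂ * Y₃) * y₁ x + (Y₃ * P₁ - P₃ * Y₁) * y₂ x + (Y₁ * P₂ - P₁ * Y₂) * y₃ x = 0 := by
  rw [← h₂.wronskian_eq_of_tendsto h₃ hs hsc hl hY₂ hP₂ hY₃ hP₃ hx,
    ← h₃.wronskian_eq_of_tendsto h₁ hs hsc hl hY₃ hP₃ hY₁ hP₁ hx,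
    ← h₁.wronskian_eq_of_tendsto h₂ hs hsc hl hY₁ hP₁ hY₂ hP₂ hx]
  ring

end IsLinearSystemSolution

lemma cpow_neg_mul_cpow {z : ℂ} (hz : z ≠ 0) (ν : ℂ) : z ^ (-ν) * z ^ ν = 1 := by
  rw [← Complex.cpow_add _ _ hz, neg_add_cancel, Complex.cpow_zero]

lemma hasDerivAt_cpow_mul_besselClifford (ν : ℂ) {w : ℝ} (hw : 0 < w) :
    HasDerivAt (fun w : ℝ => (w : ℂ) ^ ν * besselClifford ν w)
      ((w : ℂ) ^ (ν - 1) * besselClifford (ν - 1) w) w := by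
  have hw' : (w : ℂ) ∈ Complex.slitPlane := Complex.ofReal_mem_slitPlane.mpr hw
  have hpow : (w : ℂ) ^ ν = w ^ (ν - 1) * w := by
    have hw0 := Complex.slitPlane_ne_zero hw'
    rw [Complex.cpow_sub ν 1 hw0, Complex.cpow_one, div_mul_cancel₀ _ hw0]
  refine (((hasDerivAt_id (w : ℂ)).cpow_const hw').mul
    (hasDerivAt_besselClifford ν w)).comp_ofReal.congr_deriv ?_
  rw [← besselClifford_recurrence ν, id, mul_one, hpow]
  ring

lemma tendsto_besselClifford_nhdsGT_zero (ν : ℂ) :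
    Tendsto (fun w : ℝ => besselClifford ν w) (𝓝[>] 0) (𝓝 (Complex.Gamma (ν + 1))⁻¹) := by
  rw [← besselClifford_zero_right, ← Complex.ofReal_zero]
  exact tendsto_nhdsWithin_of_tendsto_nhds
    (hasDerivAt_besselClifford ν (0 : ℝ)).comp_ofReal.continuousAt.tendsto

lemma tendsto_cpow_mul_besselClifford_nhdsGT_zero {ν : ℂ} (hν : 0 < ν.re) :
    Tendsto (fun w : ℝ => (w : ℂ) ^ ν * besselClifford ν w) (𝓝[>] 0) (𝓝 0) := by
  have hν0 : ν ≠ 0 := by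
    rintro rfl
    simp at hν
  have hpow := (Complex.continuousAt_ofReal_cpow_const 0 ν (.inl hν)).tendsto
  rw [Complex.ofReal_zero, Complex.zero_cpow hν0] at hpow
  simpa using (tendsto_nhdsWithin_of_tendsto_nhds hpow).mul (tendsto_besselClifford_nhdsGT_zero ν)

lemma isLinearSystemSolution_macdonaldIntegral (ν : ℂ) :
    IsLinearSystemSolution (fun w : ℝ => (w : ℂ) ^ (ν - 1)) (fun w : ℝ => (w : ℂ) ^ (-ν)) (Ioi 0)
      (macdonaldIntegral ν) fun w => -macdonaldIntegral (1 - ν) w where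
  hasDerivAt_fst w hw := (hasDerivAt_macdonaldIntegral hw ν).congr_deriv <| by
    rw [macdonaldIntegral_eq_cpow_mul_neg hw, neg_sub, mul_neg]
  hasDerivAt_snd w hw := (hasDerivAt_macdonaldIntegral hw (1 - ν)).neg.congr_deriv <| by
    rw [neg_neg, sub_sub_cancel_left, macdonaldIntegral_eq_cpow_mul_neg hw, neg_neg]

lemma isLinearSystemSolution_besselClifford_neg (ν : ℂ) :
    IsLinearSystemSolution (fun w : ℝ => (w : ℂ) ^ (ν - 1)) (fun w : ℝ => (w : ℂ) ^ (-ν)) (Ioi 0)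
      (fun w => besselClifford (-ν) w) fun w => (w : ℂ) ^ (1 - ν) * besselClifford (1 - ν) w where
  hasDerivAt_fst w hw := (hasDerivAt_besselClifford (-ν) w).comp_ofReal.congr_deriv <| by
    rw [← neg_sub 1 ν, ← mul_assoc, cpow_neg_mul_cpow (Complex.ofReal_ne_zero.mpr (ne_of_gt hw)),
      one_mul, neg_add_eq_sub]
  hasDerivAt_snd w hw := (hasDerivAt_cpow_mul_besselClifford (1 - ν) hw).congr_deriv <| by
    rw [sub_sub_cancel_left]

lemma isLinearSystemSolution_cpow_mul_besselClifford (ν : ℂ) :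
    IsLinearSystemSolution (fun w : ℝ => (w : ℂ) ^ (ν - 1)) (fun w : ℝ => (w : ℂ) ^ (-ν)) (Ioi 0)
      (fun w => (w : ℂ) ^ ν * besselClifford ν w) fun w => besselClifford (ν - 1) w where
  hasDerivAt_fst _ hw := hasDerivAt_cpow_mul_besselClifford ν hw
  hasDerivAt_snd w hw := (hasDerivAt_besselClifford (ν - 1) w).comp_ofReal.congr_deriv <| by
    rw [← mul_assoc, cpow_neg_mul_cpow (Complex.ofReal_ne_zero.mpr (ne_of_gt hw)), one_mul,
      sub_add_cancel]

lemma sin_mul_macdonaldIntegral_of_mem_strip {w : ℝ} (hw : 0 < w) {ν : ℂ} (hν₀ : 0 < ν.re)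
    (hν₁ : ν.re < 1) :
    Complex.sin (π * ν) * macdonaldIntegral ν w =
      π * (besselClifford (-ν) w - w ^ ν * besselClifford ν w) := by
  have hν₁' : 0 < (1 - ν).re := by simpa using hν₁
  have hY₂ := tendsto_besselClifford_nhdsGT_zero (-ν)
  have hP₃ := tendsto_besselClifford_nhdsGT_zero (ν - 1)
  rw [neg_add_eq_sub] at hY₂
  rw [sub_add_cancel] at hP₃
  have hrel := (isLinearSystemSolution_macdonaldIntegral ν).linear_relation_of_tendsto
    (isLinearSystemSolution_besselClifford_neg ν) (isLinearSystemSolution_cpow_mul_besselClifford ν)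
    isOpen_Ioi isPreconnected_Ioi self_mem_nhdsWithin
    (tendsto_macdonaldIntegral_nhdsGT_zero hν₀) (tendsto_macdonaldIntegral_nhdsGT_zero hν₁').neg
    hY₂ (tendsto_cpow_mul_besselClifford_nhdsGT_zero hν₁')
    (tendsto_cpow_mul_besselClifford_nhdsGT_zero hν₀) hP₃ hw
  have hΓν := Complex.Gamma_ne_zero_of_re_pos hν₀
  have hΓν' := Complex.Gamma_ne_zero_of_re_pos hν₁'
  have hreflection : (Complex.Gamma (1 - ν))⁻¹ * (Complex.Gamma ν)⁻¹ = Complex.sin (π * ν) / π := by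
    rw [← mul_inv, mul_comm, Complex.Gamma_mul_Gamma_one_sub, inv_div]
  simp only [mul_zero, zero_mul, sub_zero, zero_sub, neg_mul, neg_neg, inv_mul_cancel₀ hΓν,
    mul_inv_cancel₀ hΓν', hreflection] at hrel
  have hπ : (π : ℂ) ≠ 0 := Complex.ofReal_ne_zero.mpr Real.pi_ne_zero
  field_simp at hrel
  linear_combination hrel

lemma sin_mul_macdonaldIntegral {w : ℝ} (hw : 0 < w) (ν : ℂ) :
    Complex.sin (π * ν) * macdonaldIntegral ν w =
      π * (besselClifford (-ν) w - w ^ ν * besselClifford ν w) := by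
  have hpow : Differentiable ℂ fun ν : ℂ => (w : ℂ) ^ ν := fun ν =>
    differentiableAt_id.const_cpow (.inl (Complex.ofReal_ne_zero.mpr hw.ne'))
  have hC := differentiable_besselClifford_order w
  have hH := differentiable_macdonaldIntegral_order hw
  have hleft : Differentiable ℂ fun ν => Complex.sin (π * ν) * macdonaldIntegral ν w := by fun_prop
  have hright : Differentiable ℂ fun ν =>
      π * (besselClifford (-ν) w - w ^ ν * besselClifford ν w) :=
    ((hC.comp differentiable_neg).sub (hpow.mul hC)).const_mul _
  have hstrip : Complex.re ⁻¹' Ioo 0 1 ∈ 𝓝 (1 / 2 : ℂ) :=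
    (isOpen_Ioo.preimage Complex.continuous_re).mem_nhds (by norm_num)
  refine congrFun (AnalyticOnNhd.eq_of_eventuallyEq (z₀ := 1 / 2) (fun z _ => hleft.analyticAt z)
    (fun z _ => hright.analyticAt z) ?_) ν
  filter_upwards [hstrip] with μ hμ using sin_mul_macdonaldIntegral_of_mem_strip hw hμ.1 hμ.2

/-! ### The modified Bessel function of the second kind -/

lemma sin_ne_zero_of_not_exists_int {ν : ℂ} (hν : ¬∃ n : ℤ, ν = n) : Complex.sin (ν * π) ≠ 0 := by
  rw [Ne, Complex.sin_eq_zero_iff]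
  rintro ⟨n, hn⟩
  exact hν ⟨n, mul_right_cancel₀ (Complex.ofReal_ne_zero.mpr Real.pi_ne_zero) hn⟩

lemma eventually_nhdsNE_intCast_not_exists_int (n : ℤ) :
    ∀ᶠ ν : ℂ in 𝓝[≠] (n : ℂ), ¬∃ m : ℤ, ν = m := by
  filter_upwards [self_mem_nhdsWithin,
    nhdsWithin_le_nhds (Metric.ball_mem_nhds (n : ℂ) one_pos)] with ν hne hball
  rintro ⟨m, rfl⟩
  rw [Metric.mem_ball, dist_eq_norm, ← Int.cast_sub, Complex.norm_intCast, ← Int.cast_abs] at hball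
  have hmn : m = n := sub_eq_zero.mp (Int.abs_lt_one_iff.mp (mod_cast hball))
  exact hne (by simp [hmn])

lemma ofReal_sq_cpow {r : ℝ} (hr : 0 ≤ r) (ν : ℂ) :
    ((r ^ 2 : ℝ) : ℂ) ^ ν = (r : ℂ) ^ ν * (r : ℂ) ^ ν := by
  rw [sq, Complex.ofReal_mul, Complex.mul_cpow_ofReal_nonneg hr hr]

lemma pi_div_sin_mul_besselI_neg_sub_besselI {ν : ℂ} (hν : ¬∃ n : ℤ, ν = n) {x : ℝ} (hx : 0 < x) :
    π / (2 * Complex.sin (ν * π)) * (besselI (-ν) x - besselI ν x) =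
      (x / 2 : ℂ) ^ (-ν) / 2 * macdonaldIntegral ν ((x / 2) ^ 2) := by
  have hx2 : 0 < x / 2 := half_pos hx
  have hx0 : (x : ℂ) ≠ 0 := Complex.ofReal_ne_zero.mpr hx.ne'
  have hconn := sin_mul_macdonaldIntegral (pow_pos hx2 2) ν
  rw [ofReal_sq_cpow hx2.le] at hconn
  push_cast at hconn
  have hcancel := cpow_neg_mul_cpow (div_ne_zero hx0 two_ne_zero) ν
  rw [div_mul_eq_mul_div,
    div_eq_iff (mul_ne_zero two_ne_zero (sin_ne_zero_of_not_exists_int hν)),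
    besselI_eq_cpow_mul_besselClifford _ hx0, besselI_eq_cpow_mul_besselClifford _ hx0,
    mul_comm ν]
  linear_combination (π * (x / 2 : ℂ) ^ ν * besselClifford ν ((x / 2) ^ 2)) * hcancel
    - (x / 2 : ℂ) ^ (-ν) * hconn

lemma besselK_eq_cpow_mul_macdonaldIntegral (ν : ℂ) {x : ℝ} (hx : 0 < x) :
    besselK ν x = (x / 2 : ℂ) ^ (-ν) / 2 * macdonaldIntegral ν ((x / 2) ^ 2) := by
  unfold besselK
  split_ifs with hν
  · obtain ⟨n, rfl⟩ := hν
    have hx2 : (x / 2 : ℂ) ≠ 0 :=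
      div_ne_zero (Complex.ofReal_ne_zero.mpr hx.ne') two_ne_zero
    have hcont : Continuous fun μ : ℂ =>
        (x / 2 : ℂ) ^ (-μ) / 2 * macdonaldIntegral μ ((x / 2) ^ 2) :=
      ((continuous_neg.const_cpow (.inl hx2)).div_const 2).mul
        (differentiable_macdonaldIntegral_order (pow_pos (half_pos hx) 2)).continuous
    refine ((tendsto_nhdsWithin_of_tendsto_nhds (hcont.tendsto (n : ℂ))).congr' ?_).limUnder_eq
    filter_upwards [eventually_nhdsNE_intCast_not_exists_int n] with μ hμ
    exact (pi_div_sin_mul_besselI_neg_sub_besselI hμ hx).symm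
  · exact pi_div_sin_mul_besselI_neg_sub_besselI hν hx

lemma besselK_neg (ν : ℂ) {x : ℝ} (hx : 0 < x) : besselK (-ν) x = besselK ν x := by
  have hx2 : (x / 2 : ℂ) ≠ 0 :=
    div_ne_zero (Complex.ofReal_ne_zero.mpr hx.ne') two_ne_zero
  have hcancel := cpow_neg_mul_cpow hx2 ν
  rw [besselK_eq_cpow_mul_macdonaldIntegral _ hx, besselK_eq_cpow_mul_macdonaldIntegral _ hx,
    macdonaldIntegral_eq_cpow_mul_neg (by positivity) ν, ofReal_sq_cpow (half_pos hx).le, neg_neg]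
  push_cast
  linear_combination
    -((x / 2 : ℂ) ^ ν / 2 * macdonaldIntegral (-ν) ((x / 2) ^ 2)) * hcancel

lemma cpow_mul_besselK (ν : ℂ) {x : ℝ} (hx : 0 < x) :
    (x : ℂ) ^ ν * besselK ν x = 2 ^ ν / 2 * macdonaldIntegral ν ((x / 2) ^ 2) := by
  have hx2 : (x / 2 : ℂ) ≠ 0 :=
    div_ne_zero (Complex.ofReal_ne_zero.mpr hx.ne') two_ne_zero
  have hsplit : (x : ℂ) ^ ν = 2 ^ ν * (x / 2 : ℂ) ^ ν := by
    have h := Complex.mul_cpow_ofReal_nonneg zero_le_two (half_pos hx).le ν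
    push_cast at h
    rwa [mul_div_cancel₀ _ two_ne_zero] at h
  rw [besselK_eq_cpow_mul_macdonaldIntegral ν hx, hsplit]
  linear_combination (2 ^ ν / 2 * macdonaldIntegral ν ((x / 2) ^ 2)) * cpow_neg_mul_cpow hx2 ν

lemma hasDerivAt_cpow_mul_besselK (ν : ℂ) {x : ℝ} (hx : 0 < x) :
    HasDerivAt (fun x : ℝ => (x : ℂ) ^ ν * besselK ν x) (-((x : ℂ) ^ ν * besselK (ν - 1) x)) x := by
  have hsq : HasDerivAt (fun x : ℝ => (x / 2) ^ 2) (x / 2) x :=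
    (((hasDerivAt_id x).div_const 2).pow 2).congr_deriv (by simp only [id]; ring)
  have hH := ((hasDerivAt_macdonaldIntegral (pow_pos (half_pos hx) 2) ν).scomp x hsq).const_mul
    ((2 : ℂ) ^ ν / 2)
  have hx0 : (x : ℂ) ≠ 0 := Complex.ofReal_ne_zero.mpr hx.ne'
  have hlower := cpow_mul_besselK (ν - 1) hx
  rw [Complex.cpow_sub _ _ hx0, Complex.cpow_sub _ _ two_ne_zero, Complex.cpow_one,
    Complex.cpow_one, div_mul_eq_mul_div, div_eq_iff hx0] at hlower
  refine (hH.congr_of_eventuallyEq ?_).congr_deriv ?_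
  · filter_upwards [Ioi_mem_nhds hx] with y hy using cpow_mul_besselK ν hy
  · rw [hlower, Complex.real_smul]
    push_cast
    ring

/-- `K_ν(x)` for real order and argument, as a real number; for `x > 0` nothing is lost in taking
the real part. -/
noncomputable def besselKReal (ν x : ℝ) : ℝ := (besselK ν x).re

lemma besselKReal_neg (ν : ℝ) {x : ℝ} (hx : 0 < x) : besselKReal (-ν) x = besselKReal ν x := by
  rw [besselKReal, Complex.ofReal_neg, besselK_neg ν hx, besselKReal]

lemma re_cpow_mul_besselK (μ ν : ℝ) {x : ℝ} (hx : 0 ≤ x) :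
    ((x : ℂ) ^ (μ : ℂ) * besselK ν x).re = x ^ μ * besselKReal ν x := by
  rw [← Complex.ofReal_cpow hx, Complex.re_ofReal_mul, besselKReal]

lemma besselKReal_pos (ν : ℝ) {x : ℝ} (hx : 0 < x) : 0 < besselKReal ν x := by
  have hK : x ^ ν * besselKReal ν x = 2 ^ ν / 2 * (macdonaldIntegral ν ((x / 2) ^ 2)).re := by
    rw [← re_cpow_mul_besselK ν ν hx.le, cpow_mul_besselK ν hx, ← Complex.ofReal_ofNat,
      ← Complex.ofReal_cpow zero_le_two, ← Complex.ofReal_div, Complex.re_ofReal_mul]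
  have hH := macdonaldIntegral_ofReal_re_pos ν (pow_pos (half_pos hx) 2)
  refine pos_of_mul_pos_right (a := x ^ ν) ?_ (by positivity)
  rw [hK]
  positivity

lemma hasDerivAt_rpow_mul_besselKReal (ν : ℝ) {x : ℝ} (hx : 0 < x) :
    HasDerivAt (fun x => x ^ ν * besselKReal ν x) (-(x ^ ν * besselKReal (ν - 1) x)) x := by
  have hre := Complex.reCLM.hasFDerivAt.comp_hasDerivAt x (hasDerivAt_cpow_mul_besselK ν hx)
  have hν : (ν : ℂ) - 1 = (ν - 1 : ℝ) := by push_cast; rfl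
  rw [hν, map_neg, Complex.reCLM_apply, re_cpow_mul_besselK _ _ hx.le] at hre
  refine hre.congr_of_eventuallyEq ?_
  filter_upwards [Ioi_mem_nhds hx] with y (hy : 0 < y)
  exact (re_cpow_mul_besselK ν ν hy.le).symm

lemma hasDerivAt_rpow_mul_besselKReal_mul_sq (ν : ℝ) {c : ℝ} (hc : 0 < c) {x : ℝ} (hx : 0 < x) :
    HasDerivAt (fun x => x ^ (2 * ν) * besselKReal ν (c * x ^ 2))
      (-(2 * c * x ^ (2 * ν + 1) * besselKReal (ν - 1) (c * x ^ 2))) x := by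
  have hpow {y : ℝ} (hy : 0 < y) : y ^ (2 * ν) = c ^ (-ν) * (c * y ^ 2) ^ ν := by
    rw [Real.mul_rpow hc.le (sq_nonneg y), ← mul_assoc, ← Real.rpow_add hc, neg_add_cancel,
      Real.rpow_zero, one_mul, ← Real.rpow_natCast_mul hy.le, Nat.cast_ofNat]
  have hsq : HasDerivAt (fun x => c * x ^ 2) (c * (2 * x)) x := by
    simpa using (hasDerivAt_pow 2 x).const_mul c
  have hderiv := ((hasDerivAt_rpow_mul_besselKReal ν (by positivity)).comp x hsq).const_mul
    (c ^ (-ν))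
  refine (hderiv.congr_of_eventuallyEq ?_).congr_deriv ?_
  · filter_upwards [Ioi_mem_nhds hx] with y hy
    rw [hpow hy, mul_assoc, Function.comp_apply]
  · rw [Real.rpow_add_one hx.ne', hpow hx]
    ring

lemma antitoneOn_of_hasDerivAt_nonpos {S : Set ℝ} {f f' : ℝ → ℝ} (hS : Convex ℝ S)
    (hf : ∀ x ∈ S, HasDerivAt f (f' x) x) (hf' : ∀ x ∈ S, f' x ≤ 0) : AntitoneOn f S :=
  antitoneOn_of_hasDerivWithinAt_nonpos hS (fun x hx => (hf x hx).continuousAt.continuousWithinAt)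
    (fun x hx => (hf x (interior_subset hx)).hasDerivWithinAt)
    fun x hx => hf' x (interior_subset hx)

lemma antitoneOn_rpow_mul_besselKReal_mul_sq (ν : ℝ) {c : ℝ} (hc : 0 < c) :
    AntitoneOn (fun x => x ^ (2 * ν) * besselKReal ν (c * x ^ 2)) (Ioi 0) := by
  refine antitoneOn_of_hasDerivAt_nonpos (convex_Ioi 0)
    (fun x hx => hasDerivAt_rpow_mul_besselKReal_mul_sq ν hc hx) fun x (hx : 0 < x) => ?_
  have hK := besselKReal_pos (ν - 1) (by positivity : 0 < c * x ^ 2)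
  rw [neg_nonpos]
  positivity

/-! ### The kernel -/

lemma convexOn_of_hasDerivAt_of_monotoneOn {S : Set ℝ} {f f' : ℝ → ℝ} (hS : Convex ℝ S)
    (hf : ∀ x ∈ S, HasDerivAt f (f' x) x) (hf' : MonotoneOn f' S) : ConvexOn ℝ S f := by
  have hfi : ∀ x ∈ interior S, HasDerivAt f (f' x) x := fun x hx => hf x (interior_subset hx)
  refine MonotoneOn.convexOn_of_deriv hS (fun x hx => (hf x hx).continuousAt.continuousWithinAt)
    (fun x hx => (hfi x hx).differentiableAt.differentiableWithinAt) ?_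
  exact (hf'.mono interior_subset).congr fun x hx => (hfi x hx).deriv.symm

lemma hasDerivAt_rpow_neg_mul_besselKReal_mul_sq (ν : ℝ) {c : ℝ} (hc : 0 < c) {x : ℝ}
    (hx : 0 < x) :
    HasDerivAt (fun x => x ^ (-2 * ν) * besselKReal ν (c * x ^ 2))
      (-(2 * c * x ^ (1 - 2 * ν) * besselKReal (ν + 1) (c * x ^ 2))) x := by
  have hneg {μ y : ℝ} (hy : 0 < y) : besselKReal (-μ) (c * y ^ 2) = besselKReal μ (c * y ^ 2) :=
    besselKReal_neg μ (by positivity)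
  have hderiv := hasDerivAt_rpow_mul_besselKReal_mul_sq (-ν) hc hx
  rw [← neg_add', hneg hx, mul_neg, neg_add_eq_sub, ← neg_mul] at hderiv
  refine hderiv.congr_of_eventuallyEq ?_
  filter_upwards [Ioi_mem_nhds hx] with y hy
  rw [hneg hy]

lemma antitoneOn_rpow_mul_besselKReal_add_one_mul_sq {ν : ℝ} (hν : -1 / 4 ≤ ν) {c : ℝ}
    (hc : 0 < c) :
    AntitoneOn (fun x => 2 * c * x ^ (1 - 2 * ν) * besselKReal (ν + 1) (c * x ^ 2)) (Ioi 0) := by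
  have hprod : AntitoneOn (fun x => 2 * c * (x ^ (-1 - 4 * ν) *
      (x ^ (2 * (ν + 1)) * besselKReal (ν + 1) (c * x ^ 2)))) (Ioi 0) := by
    intro x (hx : 0 < x) y (hy : 0 < y) hxy
    have hK := besselKReal_pos (ν + 1) (by positivity : 0 < c * y ^ 2)
    exact mul_le_mul_of_nonneg_left (mul_le_mul (Real.rpow_le_rpow_of_nonpos hx hxy (by linarith))
      (antitoneOn_rpow_mul_besselKReal_mul_sq (ν + 1) hc hx hy hxy) (by positivity)
      (by positivity)) (by positivity)
  refine hprod.congr fun x (hx : 0 < x) => ?_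
  simp only [show 1 - 2 * ν = (-1 - 4 * ν) + 2 * (ν + 1) by ring, Real.rpow_add hx]
  ring

lemma convexOn_rpow_neg_mul_besselKReal_mul_sq {ν : ℝ} (hν : -1 / 4 ≤ ν) {c : ℝ} (hc : 0 < c) :
    ConvexOn ℝ (Ioi 0) fun x => x ^ (-2 * ν) * besselKReal ν (c * x ^ 2) :=
  convexOn_of_hasDerivAt_of_monotoneOn (convex_Ioi 0)
    (fun _ hx => hasDerivAt_rpow_neg_mul_besselKReal_mul_sq ν hc hx)
    (antitoneOn_rpow_mul_besselKReal_add_one_mul_sq hν hc).neg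

lemma antitoneOn_rpow_neg_mul_besselKReal_mul_sq (ν : ℝ) {c : ℝ} (hc : 0 < c) :
    AntitoneOn (fun x => x ^ (-2 * ν) * besselKReal ν (c * x ^ 2)) (Ioi 0) := by
  refine antitoneOn_of_hasDerivAt_nonpos (convex_Ioi 0)
    (fun x hx => hasDerivAt_rpow_neg_mul_besselKReal_mul_sq ν hc hx) fun x (hx : 0 < x) => ?_
  have hK := besselKReal_pos (ν + 1) (by positivity : 0 < c * x ^ 2)
  rw [neg_nonpos]
  positivity

end

theorem besselK_kernel_convex_general (s : ℝ) (hs : 1 ≤ s) (g h : ℝ → ℝ)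
    (hg : ∀ x : ℝ, g x =
      x ^ (1 - s / 2) * (besselK (((s - 2) / 4 : ℝ) : ℂ) ((2 * π * x ^ 2 : ℝ) : ℂ)).re)
    (hh : ∀ x : ℝ, h x =
      (4 * π * x ^ (1 - s)) *
        (x ^ ((s + 2) / 2) * (besselK (((s + 2) / 4 : ℝ) : ℂ) ((2 * π * x ^ 2 : ℝ) : ℂ)).re)) :
    (∀ x ∈ Ioi (0 : ℝ), HasDerivAt g (-(h x)) x) ∧
    (∀ x ∈ Ioi (0 : ℝ), 0 < h x) ∧
    AntitoneOn h (Ioi (0 : ℝ)) ∧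
    (∀ x ∈ Ioi (0 : ℝ), 0 < g x) ∧
    AntitoneOn g (Ioi (0 : ℝ)) ∧
    ConvexOn ℝ (Ioi (0 : ℝ)) g := by
  set ν := (s - 2) / 4 with hν
  have hgK : g = fun x => x ^ (-2 * ν) * besselKReal ν (2 * π * x ^ 2) := funext fun x => by
    rw [hg, besselKReal, show 1 - s / 2 = -2 * ν by ring]
  have hhK : EqOn (fun x => 2 * (2 * π) * x ^ (1 - 2 * ν) * besselKReal (ν + 1) (2 * π * x ^ 2)) h
      (Ioi 0) := fun x (hx : 0 < x) => by
    simp only [hh, besselKReal, show 1 - 2 * ν = (1 - s) + (s + 2) / 2 by ring, Real.rpow_add hx,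
      show ν + 1 = (s + 2) / 4 by ring]
    ring
  have hK (μ : ℝ) {x : ℝ} (hx : 0 < x) : 0 < besselKReal μ (2 * π * x ^ 2) :=
    besselKReal_pos μ (by positivity)
  refine ⟨fun x hx => ?_, fun x (hx : 0 < x) => ?_, ?_, fun x (hx : 0 < x) => ?_, ?_, ?_⟩
  · rw [hgK, ← hhK hx]
    exact hasDerivAt_rpow_neg_mul_besselKReal_mul_sq ν Real.two_pi_pos hx
  · rw [← hhK hx]
    exact mul_pos (by positivity) (hK (ν + 1) hx)
  · exact (antitoneOn_rpow_mul_besselKReal_add_one_mul_sq (by linarith) Real.two_pi_pos).congr hhK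
  · rw [hgK]
    exact mul_pos (by positivity) (hK ν hx)
  · exact hgK ▸ antitoneOn_rpow_neg_mul_besselKReal_mul_sq ν Real.two_pi_pos
  · exact hgK ▸ convexOn_rpow_neg_mul_besselKReal_mul_sq (by linarith) Real.two_pi_pos

/-- **Formula (3.8) and its consequences.** For `s ∈ (1,3)`, the function
`g(x) = x^{1-s/2} K_{(s-2)/4}(2πx²)` on `(0,∞)` satisfies
`-g'(x) = [4π x^{1-s}] · [x^{(s+2)/2} K_{(s+2)/4}(2πx²)]`; the function `-g'` (being a
product of positive decreasing functions) is positive and decreasing on `(0,∞)`, and `g`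
is positive, decreasing and convex on `(0,∞)`. -/
theorem besselK_kernel_convex (s : ℝ) (hs : s ∈ Set.Ioo (1 : ℝ) 3)
    (g h : ℝ → ℝ)
    (hg : ∀ x : ℝ, g x =
      x ^ (1 - s / 2) * (besselK (((s - 2) / 4 : ℝ) : ℂ) ((2 * Real.pi * x ^ 2 : ℝ) : ℂ)).re)
    (hh : ∀ x : ℝ, h x =
      (4 * Real.pi * x ^ (1 - s)) *
        (x ^ ((s + 2) / 2) * (besselK (((s + 2) / 4 : ℝ) : ℂ) ((2 * Real.pi * x ^ 2 : ℝ) : ℂ)).re)) :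
    (∀ x ∈ Set.Ioi (0 : ℝ), HasDerivAt g (-(h x)) x) ∧
    (∀ x ∈ Set.Ioi (0 : ℝ), 0 < h x) ∧
    AntitoneOn h (Set.Ioi (0 : ℝ)) ∧
    (∀ x ∈ Set.Ioi (0 : ℝ), 0 < g x) ∧
    AntitoneOn g (Set.Ioi (0 : ℝ)) ∧
    ConvexOn ℝ (Set.Ioi (0 : ℝ)) g :=
  besselK_kernel_convex_general s hs.1.le g h hg hh
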